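/- Let X be a finite-dimensional real normed space and C_X = {(t,x) ∈ R ⊕ X : ‖x‖_X ≤ t} the associated proper cone. The following are equivalent: (1) C_X is resilient; (2) every central map α ⊕ P : R ⊕ X → R ⊕ X, given by (t,x) ↦ (α t, P(x)) for α ∈ R and a linear map P : X → X, that is (C_X,C_X)-entanglement annihilating is (C_X,C_X)-entanglement breaking. -/

import Mathlib

/-!
Entanglement breaking maps form the closed convex cone generated by the rank-one maps `φ ⊗ x`, and
trace duality identifies its dual with the cone of positive maps: `P` is entanglement breaking iff
`0 ≤ tr (S ∘ P)` for every positive `S`. If `P` is entanglement annihilating then so is `S ∘ P`, and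
so is its twirl `∑ g, g ∘ (S ∘ P) ∘ g⁻¹` over a finite symmetry group of the cone, because expanding
the tensor power only produces terms in which positive maps are applied before and after
`(S ∘ P)^{⊗ k}`. Twirling preserves the sign of the trace, so only maps that commute with the
symmetries need to be tested. For `C_X` and the reflection `(t, x) ↦ (t, -x)`, those are the central
maps.
-/

open scoped TensorProduct
open Set

noncomputable section

/-- The dual cone of a set `C`, inside the algebraic dual space. -/
def dualConeSet {V : Type*} [AddCommGroup V] [Module ℝ V] (C : Set V) :
    Set (Module.Dual ℝ V) := {φ | ∀ x ∈ C, 0 ≤ φ x}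

/-- A proper cone: a closed convex cone which is generating (`C - C = V`) and
pointed (`C ∩ (-C) = {0}`). -/
def IsProperCone {V : Type*} [NormedAddCommGroup V] [NormedSpace ℝ V] (C : Set V) : Prop :=
  IsClosed C ∧ Convex ℝ C ∧ (∀ ⦃c : ℝ⦄, 0 < c → ∀ ⦃x⦄, x ∈ C → c • x ∈ C) ∧
    (∀ v : V, ∃ x ∈ C, ∃ y ∈ C, v = x - y) ∧ C ∩ (-C) = {0}

/-- `(C₁,C₂)`-entanglement breaking maps. -/
def IsEntanglementBreaking {V₁ V₂ : Type*} [AddCommGroup V₁] [Module ℝ V₁]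
    [AddCommGroup V₂] [Module ℝ V₂] (C₁ : Set V₁) (C₂ : Set V₂) (P : V₁ →ₗ[ℝ] V₂) : Prop :=
  ∃ (m : ℕ) (φ : Fin m → Module.Dual ℝ V₁) (x : Fin m → V₂),
    (∀ i, φ i ∈ dualConeSet C₁) ∧ (∀ i, x i ∈ C₂) ∧ ∀ v, P v = ∑ i, φ i v • x i

/-- The `k`-fold minimal tensor power of a cone. -/
def minTensorPow {V : Type*} [AddCommGroup V] [Module ℝ V] (C : Set V) (k : ℕ) :
    Set (⨂[ℝ] _ : Fin k, V) :=
  convexHull ℝ {z | ∃ x : Fin k → V, (∀ i, x i ∈ C) ∧ z = PiTensorProduct.tprod ℝ x}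

/-- The functional on the `k`-fold tensor power induced by a family of functionals,
`x₁ ⊗ ⋯ ⊗ x_k ↦ ∏ i, φ i (x i)`. -/
def dualPairing {V : Type*} [AddCommGroup V] [Module ℝ V] {k : ℕ}
    (φ : Fin k → Module.Dual ℝ V) : (⨂[ℝ] _ : Fin k, V) →ₗ[ℝ] ℝ :=
  PiTensorProduct.lift ((MultilinearMap.mkPiAlgebra ℝ (Fin k) ℝ).compLinearMap φ)

/-- The `k`-fold maximal tensor power of a cone: the dual of the minimal tensor power of
the dual cone, under the canonical identification of `(V^{⊗k})*` with `(V*)^{⊗k}`. -/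
def maxTensorPow {V : Type*} [AddCommGroup V] [Module ℝ V] (C : Set V) (k : ℕ) :
    Set (⨂[ℝ] _ : Fin k, V) :=
  {z | ∀ φ : Fin k → Module.Dual ℝ V, (∀ i, φ i ∈ dualConeSet C) → 0 ≤ dualPairing φ z}

/-- `(C₁,C₂)`-entanglement annihilating maps: `P^{⊗k}` maps the `k`-fold maximal tensor power
of `C₁` into the `k`-fold minimal tensor power of `C₂`, for every `k ≥ 1`. -/
def IsEntanglementAnnihilating {V₁ V₂ : Type*} [AddCommGroup V₁] [Module ℝ V₁]
    [AddCommGroup V₂] [Module ℝ V₂] (C₁ : Set V₁) (C₂ : Set V₂) (P : V₁ →ₗ[ℝ] V₂) : Prop :=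
  ∀ k : ℕ, 1 ≤ k →
    Set.MapsTo (⇑(PiTensorProduct.map fun _ : Fin k => P))
      (maxTensorPow C₁ k) (minTensorPow C₂ k)

/-- A pair of cones is resilient if every entanglement annihilating map between them is
entanglement breaking. -/
def IsResilientPair {V₁ V₂ : Type*} [AddCommGroup V₁] [Module ℝ V₁]
    [AddCommGroup V₂] [Module ℝ V₂] (C₁ : Set V₁) (C₂ : Set V₂) : Prop :=
  ∀ P : V₁ →ₗ[ℝ] V₂, IsEntanglementAnnihilating C₁ C₂ P → IsEntanglementBreaking C₁ C₂ P

/-- The minimal tensor product of two cones. -/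
def minTensor {V W : Type*} [AddCommGroup V] [Module ℝ V] [AddCommGroup W] [Module ℝ W]
    (C : Set V) (D : Set W) : Set (V ⊗[ℝ] W) :=
  convexHull ℝ {z | ∃ x ∈ C, ∃ y ∈ D, z = x ⊗ₜ[ℝ] y}

/-- The maximal tensor product of two cones: the dual of the minimal tensor product of the
dual cones, under the canonical identification of `(V ⊗ W)*` with `V* ⊗ W*`. -/
def maxTensor {V W : Type*} [AddCommGroup V] [Module ℝ V] [AddCommGroup W] [Module ℝ W]
    (C : Set V) (D : Set W) : Set (V ⊗[ℝ] W) :=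
  {z | ∀ φ ∈ dualConeSet C, ∀ ψ ∈ dualConeSet D,
      0 ≤ TensorProduct.dualDistrib ℝ V W (φ ⊗ₜ[ℝ] ψ) z}

/-- The Lorentz cone `L_n ⊆ ℝ ⊕ ℝⁿ`. -/
def lorentzCone (n : ℕ) : Set (ℝ × EuclideanSpace ℝ (Fin n)) := {p | ‖p.2‖ ≤ p.1}


/-- The cone `C_X = {(t,x) : ‖x‖_X ≤ t}` over (the unit ball of) a normed space `X`. -/
def coneOverNormedSpace (X : Type*) [NormedAddCommGroup X] : Set (ℝ × X) :=
  {p | ‖p.2‖ ≤ p.1}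

/-- The central map `α ⊕ P : (t,x) ↦ (α t, P x)` on `ℝ ⊕ X`. -/
def centralMap {X : Type*} [AddCommGroup X] [Module ℝ X] (α : ℝ) (P : X →ₗ[ℝ] X) :
    (ℝ × X) →ₗ[ℝ] (ℝ × X) :=
  LinearMap.prodMap (α • LinearMap.id) P

section Convex

variable {E : Type*}

theorem isCompact_convexHull [AddCommGroup E] [Module ℝ E] [TopologicalSpace E]
    [ContinuousAdd E] [ContinuousSMul ℝ E] [FiniteDimensional ℝ E] {K : Set E}
    (hK : IsCompact K) : IsCompact (convexHull ℝ K) := by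
  let combinations (n : ℕ) : Set E :=
    (fun q : (Fin n → ℝ) × (Fin n → E) => ∑ i, q.1 i • q.2 i) ''
      (stdSimplex ℝ (Fin n) ×ˢ univ.pi fun _ => K)
  have isCompact_combinations (n : ℕ) : IsCompact (combinations n) :=
    ((isCompact_stdSimplex ℝ (Fin n)).prod (isCompact_univ_pi fun _ => hK)).image (by fun_prop)
  suffices convexHull ℝ K = ⋃ n ∈ Iic (Module.finrank ℝ E + 1), combinations n by
    rw [this]
    exact (finite_Iic _).isCompact_biUnion fun n _ => isCompact_combinations n
  refine Subset.antisymm (fun x hx => ?_) (iUnion₂_subset fun n _ => ?_)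
  · obtain ⟨ι, _, z, w, hz, hindep, hw, hw1, rfl⟩ := eq_pos_convex_span_of_mem_convexHull hx
    have hcard : Fintype.card ι ≤ Module.finrank ℝ E + 1 :=
      hindep.card_le_finrank_succ.trans (Nat.succ_le_succ (Submodule.finrank_le _))
    let e := (Fintype.equivFin ι).symm
    exact mem_biUnion hcard ⟨(w ∘ e, z ∘ e),
      ⟨⟨fun i => (hw _).le, (e.sum_comp w).trans hw1⟩, fun i _ => hz ⟨_, rfl⟩⟩,
      e.sum_comp fun i => w i • z i⟩
  · rintro _ ⟨⟨w, z⟩, ⟨⟨hw, hw1⟩, hz⟩, rfl⟩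
    exact mem_convexHull_of_exists_fintype w z hw hw1 (fun i => hz i trivial) rfl

theorem zero_notMem_convexHull [AddCommGroup E] [Module ℝ E] {K : Set E}
    (h : ∀ x ∈ K, ∃ f : Module.Dual ℝ E, (∀ y ∈ K, 0 ≤ f y) ∧ 0 < f x) :
    (0 : E) ∉ convexHull ℝ K := by
  intro h0
  obtain ⟨ι, _, w, z, hw, hw1, hz, hsum⟩ := mem_convexHull_iff_exists_fintype.mp h0
  obtain ⟨i, -, hi⟩ : ∃ i ∈ Finset.univ, 0 < w i :=
    Finset.exists_lt_of_sum_lt (f := 0) (by simp [hw1])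
  obtain ⟨f, hf, hfi⟩ := h (z i) (hz i)
  have hpos : 0 < ∑ j, w j * f (z j) :=
    Finset.sum_pos' (fun j _ => mul_nonneg (hw j) (hf _ (hz j)))
      ⟨i, Finset.mem_univ i, mul_pos hi hfi⟩
  have hzero : ∑ j, w j * f (z j) = 0 := by simpa using congrArg f hsum
  exact hpos.ne' hzero

theorem mem_pointedConeHull_iff [AddCommGroup E] [Module ℝ E] {K : Set E} (hK : K.Nonempty)
    {z : E} : z ∈ PointedCone.hull ℝ K ↔ ∃ r : ℝ, 0 ≤ r ∧ ∃ h ∈ convexHull ℝ K, z = r • h := by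
  constructor
  · intro hz
    induction hz using Submodule.span_induction with
    | mem x hx => exact ⟨1, zero_le_one, x, subset_convexHull ℝ K hx, (one_smul ℝ x).symm⟩
    | zero =>
      obtain ⟨x, hx⟩ := hK
      exact ⟨0, le_rfl, x, subset_convexHull ℝ K hx, (zero_smul ℝ x).symm⟩
    | add _ _ _ _ hx hy =>
      obtain ⟨r, hr, x, hx, rfl⟩ := hx
      obtain ⟨s, hs, y, hy, rfl⟩ := hy
      obtain ⟨h, hh, hsum⟩ := (convex_convexHull ℝ K).exists_mem_add_smul_eq hx hy hr hs
      exact ⟨r + s, add_nonneg hr hs, h, hh, hsum.symm⟩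
    | smul c _ _ hx =>
      obtain ⟨r, hr, x, hx, rfl⟩ := hx
      exact ⟨c * r, mul_nonneg c.2 hr, x, hx, smul_smul (c : ℝ) r x⟩
  · rintro ⟨r, hr, h, hh, rfl⟩
    have hull_le : convexHull ℝ K ⊆ PointedCone.hull ℝ K :=
      convexHull_min PointedCone.subset_hull (PointedCone.convex _)
    exact PointedCone.smul_mem _ hr (hull_le hh)

theorem isClosed_pointedConeHull [NormedAddCommGroup E] [NormedSpace ℝ E] {K : Set E}
    (hK : IsCompact (convexHull ℝ K)) (h0 : (0 : E) ∉ convexHull ℝ K) :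
    IsClosed (PointedCone.hull ℝ K : Set E) := by
  rcases K.eq_empty_or_nonempty with rfl | hne
  · simp
  have : CompactSpace (convexHull ℝ K) := isCompact_iff_compactSpace.mp hK
  -- Being a nonnegative multiple of `h ≠ 0` is a closed condition on the pair `(z, h)`, and
  -- projecting away the compact factor preserves closedness.
  have ray_closed : IsClosed {p : E × convexHull ℝ K | ‖(p.2 : E)‖ • p.1 = ‖p.1‖ • (p.2 : E)} :=
    isClosed_eq (by fun_prop) (by fun_prop)
  convert isClosedMap_fst_of_compactSpace _ ray_closed using 1
  ext z
  rw [SetLike.mem_coe, mem_pointedConeHull_iff hne]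
  constructor
  · rintro ⟨r, hr, h, hh, rfl⟩
    refine ⟨(r • h, ⟨h, hh⟩), ?_, rfl⟩
    simp [norm_smul, abs_of_nonneg hr, smul_smul, mul_comm]
  · rintro ⟨⟨z, h, hh⟩, hzh, rfl⟩
    have hnorm : ‖h‖ ≠ 0 := norm_ne_zero_iff.mpr fun h_zero => h0 (h_zero ▸ hh)
    refine ⟨‖h‖⁻¹ * ‖z‖, by positivity, h, hh, ?_⟩
    rw [mul_smul, ← show ‖h‖ • z = ‖z‖ • h from hzh, inv_smul_smul₀ hnorm]

end Convex

theorem exists_trace_comp_eq {K V W : Type*} [Field K] [AddCommGroup V] [Module K V]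
    [FiniteDimensional K V] [AddCommGroup W] [Module K W] [FiniteDimensional K W]
    (g : Module.Dual K (V →ₗ[K] W)) :
    ∃ S : W →ₗ[K] V, ∀ M : V →ₗ[K] W, LinearMap.trace K V (S ∘ₗ M) = g M := by
  let tracePairing : (W →ₗ[K] V) →ₗ[K] Module.Dual K (V →ₗ[K] W) :=
    (LinearMap.llcomp K V W V).compr₂ (LinearMap.trace K V)
  have rank_one (S : W →ₗ[K] V) (φ : Module.Dual K V) (y : W) :
      tracePairing S (φ.smulRight y) = φ (S y) := by
    have hcomp : S ∘ₗ φ.smulRight y = φ.smulRight (S y) := by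
      ext v
      simp
    change LinearMap.trace K V (S ∘ₗ φ.smulRight y) = φ (S y)
    rw [hcomp, LinearMap.trace_smulRight]
  have injective_tracePairing : Function.Injective tracePairing := by
    refine (injective_iff_map_eq_zero _).mpr fun S hS => LinearMap.ext fun y => ?_
    refine (Module.forall_dual_apply_eq_zero_iff K (S y)).mp fun φ => ?_
    simp [← rank_one, hS]
  have hrank : Module.finrank K (W →ₗ[K] V) = Module.finrank K (Module.Dual K (V →ₗ[K] W)) := by
    simp [Subspace.dual_finrank_eq, Module.finrank_linearMap, mul_comm]
  obtain ⟨S, hS⟩ :=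
    (LinearMap.injective_iff_surjective_of_finrank_eq_finrank hrank).mp injective_tracePairing g
  exact ⟨S, fun M => congrArg (fun f => f M) hS⟩

section TensorPower

variable {V W : Type*} [AddCommGroup V] [Module ℝ V] [AddCommGroup W] [Module ℝ W] {k : ℕ}

theorem dualPairing_map (φ : Fin k → Module.Dual ℝ W) (A : Fin k → V →ₗ[ℝ] W)
    (z : ⨂[ℝ] _ : Fin k, V) :
    dualPairing φ (PiTensorProduct.map A z) = dualPairing (fun i => φ i ∘ₗ A i) z := by
  have hcomp : dualPairing φ ∘ₗ PiTensorProduct.map A = dualPairing fun i => φ i ∘ₗ A i := by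
    ext x
    simp [dualPairing]
  exact LinearMap.congr_fun hcomp z

theorem mapsTo_map_maxTensorPow {C : Set V} {D : Set W} {A : Fin k → V →ₗ[ℝ] W}
    (hA : ∀ i, MapsTo (A i) C D) :
    MapsTo (PiTensorProduct.map A) (maxTensorPow C k) (maxTensorPow D k) := by
  intro z hz φ hφ
  rw [dualPairing_map]
  exact hz _ fun i x hx => hφ i _ (hA i hx)

theorem mapsTo_map_minTensorPow {C : Set V} {D : Set W} {A : Fin k → V →ₗ[ℝ] W}
    (hA : ∀ i, MapsTo (A i) C D) :
    MapsTo (PiTensorProduct.map A) (minTensorPow C k) (minTensorPow D k) := by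
  rw [mapsTo_iff_image_subset, minTensorPow, LinearMap.image_convexHull]
  refine convexHull_mono ?_
  rintro _ ⟨_, ⟨x, hx, rfl⟩, rfl⟩
  exact ⟨fun i => A i (x i), fun i => hA i (hx i), PiTensorProduct.map_tprod A x⟩

theorem smul_mem_minTensorPow {C : Set V} {c : ℝ} (hC : ∀ x ∈ C, c • x ∈ C) (hk : 1 ≤ k)
    {z : ⨂[ℝ] _ : Fin k, V} (hz : z ∈ minTensorPow C k) : c • z ∈ minTensorPow C k := by
  have scaled := smul_mem_smul_set (a := c) hz
  rw [minTensorPow, ← convexHull_smul] at scaled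
  refine convexHull_mono ?_ scaled
  rintro _ ⟨_, ⟨x, hx, rfl⟩, rfl⟩
  refine ⟨Function.update x ⟨0, hk⟩ (c • x ⟨0, hk⟩), ?_, by simp [MultilinearMap.map_update_smul]⟩
  exact (Function.forall_update_iff x fun _ y => y ∈ C).mpr ⟨hC _ (hx _), fun i _ => hx i⟩

theorem sum_mem_minTensorPow {C : Set V} (hC : ∀ c : ℝ, 0 ≤ c → ∀ x ∈ C, c • x ∈ C) (hk : 1 ≤ k)
    {ι : Type*} [Fintype ι] [Nonempty ι] {z : ι → ⨂[ℝ] _ : Fin k, V}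
    (hz : ∀ i, z i ∈ minTensorPow C k) : ∑ i, z i ∈ minTensorPow C k := by
  have hcard : (Fintype.card ι : ℝ) ≠ 0 := Nat.cast_ne_zero.mpr Fintype.card_ne_zero
  have centroid_mem : ∑ i, (Fintype.card ι : ℝ)⁻¹ • z i ∈ minTensorPow C k :=
    (convex_convexHull ℝ _).sum_mem (fun _ _ => by positivity) (by simp [hcard]) fun i _ => hz i
  rw [← Finset.smul_sum] at centroid_mem
  rw [← smul_inv_smul₀ hcard (∑ i, z i)]
  exact smul_mem_minTensorPow (hC _ (Nat.cast_nonneg _)) hk centroid_mem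

end TensorPower

theorem IsEntanglementAnnihilating.sum_comp {V₀ V₁ V₂ V₃ : Type*}
    [AddCommGroup V₀] [Module ℝ V₀] [AddCommGroup V₁] [Module ℝ V₁]
    [AddCommGroup V₂] [Module ℝ V₂] [AddCommGroup V₃] [Module ℝ V₃]
    {C₀ : Set V₀} {C₁ : Set V₁} {C₂ : Set V₂} {C₃ : Set V₃} {P : V₁ →ₗ[ℝ] V₂}
    (hP : IsEntanglementAnnihilating C₁ C₂ P) (hC₃ : ∀ c : ℝ, 0 ≤ c → ∀ x ∈ C₃, c • x ∈ C₃)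
    {ι : Type*} [Fintype ι] [Nonempty ι] {A : ι → V₂ →ₗ[ℝ] V₃} {B : ι → V₀ →ₗ[ℝ] V₁}
    (hA : ∀ i, MapsTo (A i) C₂ C₃) (hB : ∀ i, MapsTo (B i) C₀ C₁) :
    IsEntanglementAnnihilating C₀ C₃ (∑ i, A i ∘ₗ P ∘ₗ B i) := by
  intro k hk z hz
  have expand : PiTensorProduct.map (fun _ : Fin k => ∑ i, A i ∘ₗ P ∘ₗ B i) =
      ∑ r : Fin k → ι, PiTensorProduct.map (fun j => A (r j)) ∘ₗ
        PiTensorProduct.map (fun _ => P) ∘ₗ PiTensorProduct.map (fun j => B (r j)) := by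
    simp only [← PiTensorProduct.map_comp]
    exact (PiTensorProduct.mapMultilinear ℝ (fun _ : Fin k => V₀) fun _ => V₃).map_sum
      fun _ i => A i ∘ₗ P ∘ₗ B i
  rw [expand, LinearMap.sum_apply]
  exact sum_mem_minTensorPow hC₃ hk fun r =>
    mapsTo_map_minTensorPow (fun j => hA (r j))
      (hP k hk (mapsTo_map_maxTensorPow (fun j => hB (r j)) hz))

namespace IsProperCone

variable {V : Type*} [NormedAddCommGroup V] [NormedSpace ℝ V] {C : Set V}

theorem zero_mem (hC : IsProperCone C) : (0 : V) ∈ C :=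
  (hC.2.2.2.2.symm ▸ mem_singleton (0 : V) : (0 : V) ∈ C ∩ -C).1

theorem smul_mem (hC : IsProperCone C) (c : ℝ) (hc : 0 ≤ c) (x : V) (hx : x ∈ C) : c • x ∈ C := by
  rcases hc.eq_or_lt with rfl | hc
  · simpa using hC.zero_mem
  · exact hC.2.2.1 hc hx

/-- The closed cone of Mathlib underlying `C`, through which the separation theorems apply;
Mathlib's `ProperCone` is neither required to be generating nor to be pointed. -/
def toProperCone (hC : IsProperCone C) : ProperCone ℝ V where
  toSubmodule := PointedCone.ofConeComb C ⟨0, hC.zero_mem⟩ fun x hx y hy a ha b hb => by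
    obtain ⟨z, hz, hsum⟩ := hC.2.1.exists_mem_add_smul_eq hx hy ha hb
    exact hsum ▸ hC.smul_mem _ (add_nonneg ha hb) z hz
  isClosed' := hC.1

theorem mem_of_forall_dualConeSet (hC : IsProperCone C) {x : V}
    (hx : ∀ φ ∈ dualConeSet C, 0 ≤ φ x) : x ∈ C := by
  by_contra hxC
  obtain ⟨f, hf, hfx⟩ := hC.toProperCone.hyperplane_separation_point (x₀ := x) hxC
  exact hfx.not_ge (hx f hf)

theorem exists_dualConeSet_pos (hC : IsProperCone C) {x : V} (hx : x ∈ C) (hx0 : x ≠ 0) :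
    ∃ φ ∈ dualConeSet C, 0 < φ x := by
  by_contra! h
  have neg_mem : -x ∈ C := hC.mem_of_forall_dualConeSet fun φ hφ => by simpa using h φ hφ
  have mem_inter : x ∈ C ∩ -C := ⟨hx, neg_mem⟩
  exact hx0 (by simpa [hC.2.2.2.2] using mem_inter)

theorem exists_pos_of_mem_dualConeSet (hC : IsProperCone C) {φ : Module.Dual ℝ V}
    (hφ : φ ∈ dualConeSet C) (hφ0 : φ ≠ 0) : ∃ x ∈ C, 0 < φ x := by
  by_contra! h
  have eq_zero {x : V} (hx : x ∈ C) : φ x = 0 := le_antisymm (h x hx) (hφ x hx)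
  refine hφ0 (LinearMap.ext fun v => ?_)
  obtain ⟨x, hx, y, hy, rfl⟩ := hC.2.2.2.1 v
  simp [eq_zero hx, eq_zero hy]

end IsProperCone

theorem IsEntanglementBreaking.trace_comp_nonneg {V W : Type*} [AddCommGroup V] [Module ℝ V]
    [FiniteDimensional ℝ V] [AddCommGroup W] [Module ℝ W] {C : Set V} {D : Set W}
    {P : V →ₗ[ℝ] W} (hP : IsEntanglementBreaking C D P) {S : W →ₗ[ℝ] V} (hS : MapsTo S D C) :
    0 ≤ LinearMap.trace ℝ V (S ∘ₗ P) := by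
  obtain ⟨m, φ, y, hφ, hy, hP⟩ := hP
  have hsum : S ∘ₗ P = ∑ i, (φ i).smulRight (S (y i)) := by
    ext v
    simp [hP]
  rw [hsum, map_sum]
  refine Finset.sum_nonneg fun i _ => ?_
  rw [LinearMap.trace_smulRight]
  exact hφ i _ (hS (hy i))

section EntanglementBreaking

variable {V W : Type*} [NormedAddCommGroup V] [NormedSpace ℝ V]
  [NormedAddCommGroup W] [NormedSpace ℝ W] {C : Set V} {D : Set W}

/-- The rank-one maps `v ↦ φ v • y` with `φ ∈ C*` and `y ∈ D` of norm one. Normalizing both factors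
makes this generating set of the cone of entanglement breaking maps compact. -/
def unitRankOneMaps (C : Set V) (D : Set W) : Set (V →L[ℝ] W) :=
  (fun p : StrongDual ℝ V × W => p.1.smulRight p.2) ''
    (({φ : StrongDual ℝ V | (φ : Module.Dual ℝ V) ∈ dualConeSet C} ∩ Metric.sphere 0 1) ×ˢ
      (D ∩ Metric.sphere 0 1))

theorem isCompact_unitRankOneMaps [FiniteDimensional ℝ V] [FiniteDimensional ℝ W] (C : Set V)
    (hD : IsClosed D) : IsCompact (unitRankOneMaps C D) := by
  have isClosed_dual : IsClosed {φ : StrongDual ℝ V | (φ : Module.Dual ℝ V) ∈ dualConeSet C} := by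
    have eq_iInter : {φ : StrongDual ℝ V | (φ : Module.Dual ℝ V) ∈ dualConeSet C} =
        ⋂ x ∈ C, {φ : StrongDual ℝ V | 0 ≤ φ x} := by
      ext φ
      simp [dualConeSet]
    rw [eq_iInter]
    exact isClosed_biInter fun x _ => isClosed_le continuous_const (by fun_prop)
  exact (((isCompact_sphere 0 1).inter_left isClosed_dual).prod
    ((isCompact_sphere 0 1).inter_left hD)).image (by fun_prop)

theorem zero_notMem_convexHull_unitRankOneMaps (hC : IsProperCone C) (hD : IsProperCone D) :
    0 ∉ convexHull ℝ (unitRankOneMaps C D) := by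
  refine zero_notMem_convexHull ?_
  rintro _ ⟨⟨φ, y⟩, ⟨⟨hφ, hφ1⟩, hy, hy1⟩, rfl⟩
  have hφ0 : (φ : Module.Dual ℝ V) ≠ 0 := by
    rintro h
    simp [show φ = 0 from ContinuousLinearMap.coe_injective h] at hφ1
  have hy0 : y ≠ 0 := by
    rintro rfl
    simp at hy1
  obtain ⟨x, hx, hφx⟩ := hC.exists_pos_of_mem_dualConeSet hφ hφ0
  obtain ⟨ψ, hψ, hψy⟩ := hD.exists_dualConeSet_pos hy hy0
  refine ⟨ψ ∘ₗ (ContinuousLinearMap.apply ℝ W x).toLinearMap, ?_, ?_⟩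
  · rintro _ ⟨⟨χ, w⟩, ⟨⟨hχ, -⟩, hw, -⟩, rfl⟩
    simpa using mul_nonneg (hχ x hx) (hψ w hw)
  · simpa using mul_pos hφx hψy

theorem smulRight_mem_hull_unitRankOneMaps (hD : ∀ c : ℝ, 0 ≤ c → ∀ y ∈ D, c • y ∈ D)
    {φ : StrongDual ℝ V} (hφ : (φ : Module.Dual ℝ V) ∈ dualConeSet C) {y : W} (hy : y ∈ D) :
    φ.smulRight y ∈ PointedCone.hull ℝ (unitRankOneMaps C D) := by
  by_cases hφ0 : φ = 0
  · simp [hφ0]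
  by_cases hy0 : y = 0
  · simp [hy0]
  have normalize :
      φ.smulRight y = (‖φ‖ * ‖y‖) • (‖φ‖⁻¹ • φ).smulRight (‖y‖⁻¹ • y) := by
    ext v
    have cancel : ‖φ‖ * ‖y‖ * (‖φ‖⁻¹ * φ v * ‖y‖⁻¹) = φ v := by field_simp
    simp [smul_smul, cancel]
  rw [normalize]
  refine PointedCone.smul_mem _ (by positivity) (PointedCone.subset_hull ?_)
  exact ⟨(‖φ‖⁻¹ • φ, ‖y‖⁻¹ • y),
    ⟨⟨fun x hx => mul_nonneg (by positivity) (hφ x hx),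
        mem_sphere_zero_iff_norm.mpr (norm_smul_inv_norm hφ0)⟩,
      ⟨hD _ (by positivity) y hy,
        mem_sphere_zero_iff_norm.mpr (norm_smul_inv_norm hy0)⟩⟩, rfl⟩

theorem isEntanglementBreaking_iff_mem_hull [FiniteDimensional ℝ V]
    (hD : ∀ c : ℝ, 0 ≤ c → ∀ y ∈ D, c • y ∈ D) {P : V →ₗ[ℝ] W} :
    IsEntanglementBreaking C D P ↔
      P.toContinuousLinearMap ∈ PointedCone.hull ℝ (unitRankOneMaps C D) := by
  constructor
  · rintro ⟨m, φ, y, hφ, hy, hP⟩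
    have hsum : P.toContinuousLinearMap = ∑ i, (φ i).toContinuousLinearMap.smulRight (y i) := by
      ext v
      simp [hP]
    rw [hsum]
    exact sum_mem fun i _ => smulRight_mem_hull_unitRankOneMaps hD (hφ i) (hy i)
  · intro hP
    obtain ⟨m, c, M, hsum⟩ := Submodule.mem_span_set'.mp hP
    choose p hp hpM using fun i => (M i).2
    refine ⟨m, fun i => (p i).1, fun i => (c i : ℝ) • (p i).2, fun i => (hp i).1.1,
      fun i => hD _ (c i).2 _ (hp i).2.1, fun v => ?_⟩
    have hv : ∑ i, (c i : ℝ) • (M i : V →L[ℝ] W) v = P v := by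
      simpa only [sum_apply] using! congrArg (fun f : V →L[ℝ] W => f v) hsum
    rw [← hv]
    refine Finset.sum_congr rfl fun i _ => ?_
    simp [← hpM, smul_comm (c i : ℝ)]

theorem isEntanglementBreaking_iff_forall_trace_comp_nonneg [FiniteDimensional ℝ V]
    [FiniteDimensional ℝ W] (hC : IsProperCone C) (hD : IsProperCone D) {P : V →ₗ[ℝ] W} :
    IsEntanglementBreaking C D P ↔
      ∀ S : W →ₗ[ℝ] V, MapsTo S D C → 0 ≤ LinearMap.trace ℝ V (S ∘ₗ P) := by
  refine ⟨fun hP S hS => hP.trace_comp_nonneg hS, fun h => ?_⟩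
  rw [isEntanglementBreaking_iff_mem_hull hD.smul_mem]
  by_contra hP
  let breakingCone : ProperCone ℝ (V →L[ℝ] W) :=
    ⟨PointedCone.hull ℝ (unitRankOneMaps C D),
      isClosed_pointedConeHull (isCompact_convexHull (isCompact_unitRankOneMaps C hD.1))
        (zero_notMem_convexHull_unitRankOneMaps hC hD)⟩
  obtain ⟨f, hf, hfP⟩ := breakingCone.hyperplane_separation_point hP
  obtain ⟨S, hS⟩ := exists_trace_comp_eq
    (f.toLinearMap ∘ₗ (LinearMap.toContinuousLinearMap (𝕜 := ℝ) (E := V) (F' := W)).toLinearMap)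
  refine hfP.not_ge ((h S fun y hy => ?_).trans_eq (hS P))
  refine hC.mem_of_forall_dualConeSet fun φ hφ => ?_
  have hrank : S ∘ₗ φ.smulRight y = φ.smulRight (S y) := by
    ext v
    simp
  rw [← LinearMap.trace_smulRight, ← hrank, hS]
  exact hf _ (smulRight_mem_hull_unitRankOneMaps (φ := φ.toContinuousLinearMap) hD.smul_mem hφ hy)

end EntanglementBreaking

theorem isIntertwiningMap_norm_linHom {k G V W : Type*} [CommRing k] [Group G] [Fintype G]
    [AddCommGroup V] [Module k V] [AddCommGroup W] [Module k W] (ρ : Representation k G V)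
    (σ : Representation k G W) (T : V →ₗ[k] W) : ρ.IsIntertwiningMap σ ((ρ.linHom σ).norm T) :=
  (Representation.mem_linHom_invariants_iff_isIntertwining _).mp fun g =>
    (ρ.linHom σ).self_norm_apply g T

theorem trace_norm_linHom {k G V : Type*} [CommRing k] [Group G] [Fintype G] [AddCommGroup V]
    [Module k V] (ρ : Representation k G V) (T : V →ₗ[k] V) :
    LinearMap.trace k V ((ρ.linHom ρ).norm T) = Fintype.card G * LinearMap.trace k V T := by
  have trace_conj (g : G) : LinearMap.trace k V (ρ g ∘ₗ T ∘ₗ ρ g⁻¹) = LinearMap.trace k V T := by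
    rw [← Module.End.mul_eq_comp, ← Module.End.mul_eq_comp, LinearMap.trace_mul_comm, mul_assoc,
      ← map_mul, inv_mul_cancel, map_one, mul_one]
  simp [Representation.norm, trace_conj]

theorem isResilientPair_of_forall_isIntertwiningMap {V W G : Type*}
    [NormedAddCommGroup V] [NormedSpace ℝ V] [FiniteDimensional ℝ V]
    [NormedAddCommGroup W] [NormedSpace ℝ W] [FiniteDimensional ℝ W] [Group G] [Finite G]
    {C : Set V} {D : Set W} (ρ : Representation ℝ G V)
    (hC : IsProperCone C) (hD : IsProperCone D) (hρ : ∀ g, MapsTo (ρ g) C C)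
    (h : ∀ T : V →ₗ[ℝ] V, ρ.IsIntertwiningMap ρ T →
      IsEntanglementAnnihilating C C T → IsEntanglementBreaking C C T) :
    IsResilientPair C D := by
  cases nonempty_fintype G
  intro P hP
  rw [isEntanglementBreaking_iff_forall_trace_comp_nonneg hC hD]
  intro S hS
  set T := (ρ.linHom ρ).norm (S ∘ₗ P) with hT
  have annihilating : IsEntanglementAnnihilating C C T := by
    convert hP.sum_comp (A := fun g => ρ g ∘ₗ S) hC.smul_mem (fun g => (hρ g).comp hS)
      (fun g => hρ g⁻¹) using 1
    simp [hT, Representation.norm, LinearMap.comp_assoc]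
  have breaking := h T (isIntertwiningMap_norm_linHom ρ ρ _) annihilating
  have trace_nonneg := breaking.trace_comp_nonneg (S := LinearMap.id) (mapsTo_id C)
  rw [LinearMap.id_comp, hT, trace_norm_linHom] at trace_nonneg
  exact nonneg_of_mul_nonneg_right trace_nonneg (Nat.cast_pos.mpr Fintype.card_pos)

theorem isProperCone_coneOverNormedSpace (X : Type*) [NormedAddCommGroup X] [NormedSpace ℝ X] :
    IsProperCone (coneOverNormedSpace X) := by
  refine ⟨isClosed_le (by fun_prop) (by fun_prop), ?_, ?_, ?_, ?_⟩
  · have convex_norm : ConvexOn ℝ univ fun p : ℝ × X => ‖p.2‖ :=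
      (convexOn_univ_norm (E := X)).comp_linearMap (LinearMap.snd ℝ ℝ X)
    have concave_fst : ConcaveOn ℝ univ fun p : ℝ × X => p.1 :=
      (LinearMap.fst ℝ ℝ X).concaveOn convex_univ
    simpa [coneOverNormedSpace] using (convex_norm.sub concave_fst).convex_le 0
  · intro c hc p hp
    simpa [coneOverNormedSpace, norm_smul, abs_of_pos hc, hc] using hp
  · rintro ⟨t, x⟩
    refine ⟨(|t| + ‖x‖, x), ?_, (|t| + ‖x‖ - t, 0), ?_, by simp⟩
    · simp [coneOverNormedSpace]
    · simpa [coneOverNormedSpace] using (le_abs_self t).trans (by simp)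
  · ext ⟨t, x⟩
    suffices ‖x‖ ≤ t ∧ ‖x‖ ≤ -t ↔ t = 0 ∧ x = 0 by simpa [coneOverNormedSpace]
    constructor
    · rintro ⟨h, h'⟩
      have ht : t = 0 := by linarith [norm_nonneg x]
      exact ⟨ht, norm_le_zero_iff.mp (h.trans_eq ht)⟩
    · rintro ⟨rfl, rfl⟩
      simp

/-- The two-element group `{1, -1}` acting on `ℝ ⊕ X` by the reflection `(t, x) ↦ (t, -x)`. -/
def reflectionRepresentation (X : Type*) [AddCommGroup X] [Module ℝ X] :
    Representation ℝ ℤˣ (ℝ × X) where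
  toFun u := centralMap 1 ((u : ℤ) • LinearMap.id)
  map_one' := by
    ext <;> simp [centralMap]
  map_mul' u v := by
    ext <;> simp [centralMap, mul_smul]

theorem exists_eq_centralMap_of_isIntertwiningMap {X : Type*} [AddCommGroup X] [Module ℝ X]
    {T : (ℝ × X) →ₗ[ℝ] ℝ × X}
    (hT : (reflectionRepresentation X).IsIntertwiningMap (reflectionRepresentation X) T) :
    ∃ (α : ℝ) (P : X →ₗ[ℝ] X), T = centralMap α P := by
  have reflect (t : ℝ) (x : X) : T (t, -x) = ((T (t, x)).1, -(T (t, x)).2) := by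
    simpa [reflectionRepresentation, centralMap] using hT.isIntertwining (-1) (t, x)
  have : IsAddTorsionFree X := .of_isTorsionFree ℝ X
  have snd_apply_inl (t : ℝ) : (T (t, 0)).2 = 0 :=
    self_eq_neg.mp (by simpa using congrArg Prod.snd (reflect t 0))
  have fst_apply_inr (x : X) : (T (0, x)).1 = 0 := by
    have neg_apply : T (0, -x) = -T (0, x) := by simp [← map_neg]
    exact self_eq_neg.mp (by simpa [neg_apply, eq_comm] using congrArg Prod.fst (reflect 0 x))
  refine ⟨(T (1, 0)).1, LinearMap.snd ℝ ℝ X ∘ₗ T ∘ₗ LinearMap.inr ℝ ℝ X, ?_⟩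
  ext <;> simp [centralMap, snd_apply_inl, fst_apply_inr]

theorem mapsTo_reflectionRepresentation {X : Type*} [NormedAddCommGroup X] [NormedSpace ℝ X]
    (u : ℤˣ) :
    MapsTo (reflectionRepresentation X u) (coneOverNormedSpace X) (coneOverNormedSpace X) := by
  intro p hp
  rcases Int.units_eq_one_or u with rfl | rfl <;>
    simpa [reflectionRepresentation, centralMap, coneOverNormedSpace] using hp

theorem coneOverNormedSpace_resilient_iff_central_general.{u} (X : Type u)
    [NormedAddCommGroup X] [NormedSpace ℝ X] [FiniteDimensional ℝ X] :
    List.TFAE [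
      IsResilientPair (coneOverNormedSpace X) (coneOverNormedSpace X),
      ∀ (α : ℝ) (P : X →ₗ[ℝ] X),
        IsEntanglementAnnihilating (coneOverNormedSpace X) (coneOverNormedSpace X)
          (centralMap α P) →
        IsEntanglementBreaking (coneOverNormedSpace X) (coneOverNormedSpace X) (centralMap α P),
      ∀ (W : Type u) [NormedAddCommGroup W] [NormedSpace ℝ W] [FiniteDimensional ℝ W] (D : Set W),
        IsProperCone D → IsResilientPair (coneOverNormedSpace X) D] := by
  have hX := isProperCone_coneOverNormedSpace X
  tfae_have 1 → 2 := fun h α P => h (centralMap α P)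
  tfae_have 2 → 3 := by
    intro h W _ _ _ D hD
    refine isResilientPair_of_forall_isIntertwiningMap (reflectionRepresentation X) hX hD
      mapsTo_reflectionRepresentation fun T hT => ?_
    obtain ⟨α, P, rfl⟩ := exists_eq_centralMap_of_isIntertwiningMap hT
    exact h α P
  tfae_have 3 → 1 := fun h => h (ℝ × X) (coneOverNormedSpace X) hX
  tfae_finish

/-- **Theorem.** `C_X` is resilient iff every entanglement annihilating central map on
`ℝ ⊕ X` is entanglement breaking. -/
theorem coneOverNormedSpace_resilient_iff_central
    (X : Type) [NormedAddCommGroup X] [NormedSpace ℝ X] [FiniteDimensional ℝ X] :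
    IsResilientPair (coneOverNormedSpace X) (coneOverNormedSpace X) ↔
      ∀ (α : ℝ) (P : X →ₗ[ℝ] X),
        IsEntanglementAnnihilating (coneOverNormedSpace X) (coneOverNormedSpace X)
          (centralMap α P) →
        IsEntanglementBreaking (coneOverNormedSpace X) (coneOverNormedSpace X)
          (centralMap α P) :=
  (coneOverNormedSpace_resilient_iff_central_general X).out 0 1

end
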